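/- arXiv:1711.07296 — 4 statements merged into one kernel-verified Lean document; each statement's English description precedes it below -/
import Mathlib

section
/- A nonzero polynomial f ∈ ℂ[z₁,…,zₙ] is K-stable if and only if for all x, y ∈ ℝⁿ with y in the interior of K, the univariate polynomial t ↦ f(x + t·y) is stable (has no roots with positive imaginary part). -/
/-- A polynomial `f ∈ ℂ[z₁,…,zₙ]` is `K`-stable if `f(z) ≠ 0` whenever the vector of
imaginary parts of `z` lies in the interior of `K`. -/
def KStable {n : ℕ} (K : Set (Fin n → ℝ)) (f : MvPolynomial (Fin n) ℂ) : Prop :=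
  ∀ z : Fin n → ℂ, (fun j => (z j).im) ∈ interior K → MvPolynomial.eval z f ≠ 0

/-!
The tube over a set `C` closed under positive scaling is swept out by the half-planes
`{x + t • y | 0 < Im t}` with `x` real and `y ∈ C`: the imaginary part of `x + t • y` is
`(Im t) • y`, and the value `t = i` already reaches every point of the tube.
-/

theorem smul_mem_interior_of_pos {𝕜 E : Type*} [GroupWithZero 𝕜] [Preorder 𝕜]
    [TopologicalSpace E] [MulAction 𝕜 E] [ContinuousConstSMul 𝕜 E] {K : Set E}
    (hK : ∀ c : 𝕜, 0 < c → ∀ x ∈ K, c • x ∈ K) (c : 𝕜) (hc : 0 < c) :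
    ∀ y ∈ interior K, c • y ∈ interior K :=
  (isOpenMap_smul₀ hc.ne').mapsTo_interior (hK c hc)

section Tube

variable {ι : Type*}

/-- The tube `ℝ^ι + iC` of complex vectors whose imaginary part lies in `C`, on which stability
is a non-vanishing condition. The base `C` need not be open or connected. -/
def tube (C : Set (ι → ℝ)) : Set (ι → ℂ) :=
  {z | (fun j => (z j).im) ∈ C}

variable {C : Set (ι → ℝ)}

theorem ofReal_add_mul_ofReal_mem_tube (hC : ∀ c : ℝ, 0 < c → ∀ y ∈ C, c • y ∈ C)
    (x : ι → ℝ) {y : ι → ℝ} (hy : y ∈ C) {t : ℂ} (ht : 0 < t.im) :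
    (fun j => (x j : ℂ) + t * (y j : ℂ)) ∈ tube C := by
  have him : (fun j => ((x j : ℂ) + t * (y j : ℂ)).im) = t.im • y := by
    ext j
    simp
  rw [tube, Set.mem_ofPred_eq, him]
  exact hC t.im ht y hy

theorem mem_tube_iff_exists_ofReal_add_mul_ofReal
    (hC : ∀ c : ℝ, 0 < c → ∀ y ∈ C, c • y ∈ C) {z : ι → ℂ} :
    z ∈ tube C ↔ ∃ x y : ι → ℝ, y ∈ C ∧ ∃ t : ℂ, 0 < t.im ∧
      (fun j => (x j : ℂ) + t * (y j : ℂ)) = z := by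
  constructor
  · intro hz
    refine ⟨fun j => (z j).re, fun j => (z j).im, hz, Complex.I, by simp, ?_⟩
    ext j
    rw [mul_comm, Complex.re_add_im]
  · rintro ⟨x, y, hy, t, ht, rfl⟩
    exact ofReal_add_mul_ofReal_mem_tube hC x hy ht

theorem stmt0_general {M : Type*} [Zero M] (hC : ∀ c : ℝ, 0 < c → ∀ y ∈ C, c • y ∈ C)
    (f : (ι → ℂ) → M) :
    (∀ z ∈ tube C, f z ≠ 0) ↔
      ∀ x y : ι → ℝ, y ∈ C → ∀ t : ℂ, 0 < t.im →
        f (fun j => (x j : ℂ) + t * (y j : ℂ)) ≠ 0 := by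
  constructor
  · intro hf x y hy t ht
    exact hf _ (ofReal_add_mul_ofReal_mem_tube hC x hy ht)
  · intro hf z hz
    obtain ⟨x, y, hy, t, ht, rfl⟩ := (mem_tube_iff_exists_ofReal_add_mul_ofReal hC).1 hz
    exact hf x y hy t ht

end Tube

/-- A nonzero polynomial `f` is `K`-stable iff for all `x, y ∈ ℝⁿ` with `y ∈ int K`,
the univariate polynomial `t ↦ f(x + t y)` is stable (no root with positive imaginary part). -/
theorem stmt0 {n : ℕ} (K : Set (Fin n → ℝ))
    (hKcl : IsClosed K) (hKconv : Convex ℝ K)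
    (hKcone : ∀ (c : ℝ), 0 ≤ c → ∀ x ∈ K, c • x ∈ K)
    (hKpointed : K ∩ (-K) ⊆ {0}) (hKfull : (interior K).Nonempty)
    (f : MvPolynomial (Fin n) ℂ) (hf : f ≠ 0) :
    KStable K f ↔
      ∀ x y : Fin n → ℝ, y ∈ interior K →
        ∀ t : ℂ, 0 < t.im →
          MvPolynomial.eval (fun j => (x j : ℂ) + t * (y j : ℂ)) f ≠ 0 := by
  have h_interior := smul_mem_interior_of_pos fun c hc => hKcone c hc.le
  exact stmt0_general h_interior fun z => MvPolynomial.eval z f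
end

section
/- If a polynomial f ∈ ℂ[z₁,…,zₙ] is K-stable for a non-convex cone K with non-empty connected interior, then f is stable with respect to the cone cl(conv(int K)). -/
/-!
The theorem is an instance of Bochner's tube theorem for polynomials: if `f` has no zeros over a
connected open set `U` of imaginary parts, it has none over the convex hull of `U`.

Suppose `f` has no zeros over the segment `[a, b]`, nor over the balls of radius `r` around its
endpoints. Restrict `f` to complex lines in direction `b - a`, so that `[a, b]` becomes the strip
`0 ≤ im τ ≤ 1`. On the two boundary lines, factoring a univariate polynomial into its roots bounds
`‖f (z + i u) - f z‖` by `C * ‖f z‖` with `C < 1`, for all real `u` shorter than a constant `δ` that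
depends only on `r` and the degree of `f`. By the Phragmén–Lindelöf principle this bound extends to
the whole strip, so `f` has no zeros over the `δ`-thickening of `[a, b]`.

Since `δ` does not depend on `[a, b]`, the set of `b ∈ U` with `f` free of zeros over `[a, b]` is
open and closed in `U`, hence all of `U`. It follows that the components of the complement of the
closure of the imaginary projection are convex.
-/

open Bornology Complex Filter Metric Polynomial Set Topology Asymptotics

section UnivariatePolynomial

lemma norm_multiset_prod_one_add_sub_one_le {R : Type*} [NormedCommRing R] [NormOneClass R]
    (s : Multiset R) : ‖(s.map (1 + ·)).prod - 1‖ ≤ Real.exp (s.map norm).sum - 1 := by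
  classical
  have h := s.toEnumFinset.norm_prod_one_add_sub_one_le Prod.fst
  rwa [← Finset.prod_map_val, ← Finset.sum_map_val, ← Function.comp_def (1 + ·) Prod.fst,
    ← Function.comp_def norm Prod.fst, ← Multiset.map_map, ← Multiset.map_map,
    Multiset.map_toEnumFinset_fst] at h

lemma norm_eval_sub_eval_le_of_forall_mem_ball_ne_zero {𝕜 : Type*} [NormedField 𝕜] {p : 𝕜[X]}
    (hp : p.Splits) {c : 𝕜} {r : ℝ} (hr : 0 < r) (hne : ∀ w ∈ ball c r, p.eval w ≠ 0) (z : 𝕜) :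
    ‖p.eval z - p.eval c‖ ≤ (Real.exp (p.natDegree * (‖z - c‖ / r)) - 1) * ‖p.eval c‖ := by
  have hroot : ∀ a ∈ p.roots, r ≤ ‖c - a‖ := fun a ha ↦ by
    by_contra! h
    exact hne a (by rwa [mem_ball_iff_norm']) (isRoot_of_mem_roots ha)
  set s : Multiset 𝕜 := p.roots.map fun a ↦ (z - c) / (c - a) with hs
  have hfactor : p.eval z = p.eval c * (s.map (1 + ·)).prod := by
    rw [hp.eval_eq_prod_roots, hp.eval_eq_prod_roots, hs, Multiset.map_map, mul_assoc,
      ← Multiset.prod_map_mul]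
    congr 2
    refine Multiset.map_congr rfl fun a ha ↦ ?_
    have : c - a ≠ 0 := norm_pos_iff.1 (hr.trans_le (hroot a ha))
    simp only [Function.comp_apply]
    field_simp
    ring
  have hsum : (s.map norm).sum ≤ p.natDegree * (‖z - c‖ / r) := by
    calc (s.map norm).sum ≤ (s.map norm).card • (‖z - c‖ / r) := by
          refine Multiset.sum_le_card_nsmul _ _ ?_
          simp only [hs, Multiset.mem_map, forall_exists_index, and_imp, forall_apply_eq_imp_iff₂,
            norm_div]
          exact fun a ha ↦ div_le_div_of_nonneg_left (norm_nonneg _) hr (hroot a ha)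
      _ ≤ p.natDegree * (‖z - c‖ / r) := by
          rw [nsmul_eq_mul, Multiset.card_map, hs, Multiset.card_map]
          gcongr
          exact p.card_roots'
  calc ‖p.eval z - p.eval c‖ = ‖(s.map (1 + ·)).prod - 1‖ * ‖p.eval c‖ := by
        rw [hfactor, ← norm_mul, sub_mul, one_mul, mul_comm]
    _ ≤ (Real.exp (p.natDegree * (‖z - c‖ / r)) - 1) * ‖p.eval c‖ := by
        gcongr
        exact (norm_multiset_prod_one_add_sub_one_le s).trans (by gcongr)

lemma degree_le_of_isBigO_of_le_cobounded {R : Type*} [NormedCommRing R] [NormMulClass R]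
    [IsDomain R] {p q : R[X]} {l : Filter R} [l.NeBot] (hl : l ≤ cobounded R)
    (h : p.eval =O[l] q.eval) : p.degree ≤ q.degree := by
  by_contra! hlt
  have hp : ∀ᶠ x in l, p.eval x ≠ 0 :=
    (eventually_cofinite_not_isRoot (ne_zero_of_degree_gt hlt)).filter_mono
      (hl.trans (le_cofinite R))
  exact isLittleO_irrefl hp.frequently
    (h.trans_isLittleO ((isLittleO_cobounded_of_degree_lt hlt).mono hl))

lemma comap_abs_re_atTop_le_cobounded : comap (_root_.abs ∘ re) atTop ≤ cobounded ℂ :=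
  tendsto_id'.1 <| tendsto_norm_atTop_iff_cobounded.1 <|
    tendsto_atTop_mono abs_re_le_norm tendsto_comap

lemma norm_eval_le_mul_norm_eval_of_horizontal_strip {p q : ℂ[X]} {a b C : ℝ} (hab : a < b)
    (hq : ∀ z : ℂ, z.im ∈ Icc a b → q.eval z ≠ 0)
    (ha : ∀ z : ℂ, z.im = a → ‖p.eval z‖ ≤ C * ‖q.eval z‖)
    (hb : ∀ z : ℂ, z.im = b → ‖p.eval z‖ ≤ C * ‖q.eval z‖)
    {z : ℂ} (hz : z.im ∈ Icc a b) : ‖p.eval z‖ ≤ C * ‖q.eval z‖ := by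
  have hdeg : p.degree ≤ q.degree := by
    let line (t : ℝ) : ℂ := t + a * I
    have hline : Tendsto line atTop (cobounded ℂ) := by
      refine Tendsto.mono_right (tendsto_comap_iff.2 ?_) comap_abs_re_atTop_le_cobounded
      simpa [line, Function.comp_def] using tendsto_abs_atTop_atTop
    refine degree_le_of_isBigO_of_le_cobounded (l := map line atTop) hline ?_
    exact isBigO_map.2 (.of_bound C (.of_forall fun t ↦ ha _ (by simp [line])))
  have hquot : (fun w ↦ p.eval w / q.eval w) =O[cobounded ℂ] fun _ ↦ (1 : ℝ) := by
    obtain ⟨K, hK, hle⟩ := (isBigO_cobounded_of_degree_le hdeg).exists_nonneg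
    exact .of_bound K <| hle.bound.mono fun w hw ↦ by
      simpa using div_le_of_le_mul₀ (norm_nonneg _) hK hw
  have hiff {w : ℂ} (hw : w.im ∈ Icc a b) :
      ‖p.eval w / q.eval w‖ ≤ C ↔ ‖p.eval w‖ ≤ C * ‖q.eval w‖ := by
    rw [norm_div, div_le_iff₀ (norm_pos_iff.2 (hq w hw))]
  refine (hiff hz).1 (PhragmenLindelof.horizontal_strip (f := fun w ↦ p.eval w / q.eval w)
    (DifferentiableOn.diffContOnCl ?_) ⟨0, by have := sub_pos.2 hab; positivity, 0, ?_⟩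
    (fun w hw ↦ (hiff ?_).2 (ha w hw)) (fun w hw ↦ (hiff ?_).2 (hb w hw)) hz.1 hz.2)
  · rw [closure_preimage_im, closure_Ioo hab.ne]
    exact p.differentiable.differentiableOn.div q.differentiable.differentiableOn hq
  · simpa using hquot.mono (inf_le_left.trans comap_abs_re_atTop_le_cobounded)
  · exact mem_Icc.2 ⟨hw.ge, hw.trans_le hab.le⟩
  · exact mem_Icc.2 ⟨hab.le.trans hw.ge, hw.le⟩

end UnivariatePolynomial

section LineRestriction

variable {ι R : Type*} [CommSemiring R]

/-- The restriction `t ↦ f (c + t • v)` of `f` to the line through `c` in direction `v`, as a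
univariate polynomial. -/
noncomputable def lineRestriction (f : MvPolynomial ι R) (c v : ι → R) : R[X] :=
  MvPolynomial.aeval (fun i ↦ C (c i) + X * C (v i)) f

lemma eval_lineRestriction (f : MvPolynomial ι R) (c v : ι → R) (t : R) :
    (lineRestriction f c v).eval t = MvPolynomial.eval (c + t • v) f := by
  have hconst : (evalRingHom t).comp (algebraMap R R[X]) = RingHom.id R :=
    RingHom.ext fun x ↦ by simp
  have hcoord : (fun i ↦ (C (c i) + X * C (v i)).eval t) = c + t • v := by
    funext i
    simp only [eval_add, eval_mul, eval_C, eval_X, Pi.add_apply, Pi.smul_apply, smul_eq_mul]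
  rw [lineRestriction, MvPolynomial.aeval_def, MvPolynomial.polynomial_eval_eval₂, hconst, hcoord,
    MvPolynomial.eval₂_id]

lemma natDegree_lineRestriction_le (f : MvPolynomial ι R) (c v : ι → R) :
    (lineRestriction f c v).natDegree ≤ f.totalDegree := by
  have hlinear (i : ι) : (C (c i) + X * C (v i)).natDegree ≤ 1 := by compute_degree
  simpa only [lineRestriction, mul_one] using
    MvPolynomial.aeval_natDegree_le f le_rfl _ hlinear

end LineRestriction

section Geometry

lemma exists_ball_subset_and_ball_subset {X : Type*} [PseudoMetricSpace X] {U : Set X}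
    (hU : IsOpen U) {x y : X} (hx : x ∈ U) (hy : y ∈ U) :
    ∃ r > 0, ball x r ⊆ U ∧ ball y r ⊆ U := by
  obtain ⟨r, hr, hrU⟩ := Metric.isOpen_iff.1 hU x hx
  obtain ⟨s, hs, hsU⟩ := Metric.isOpen_iff.1 hU y hy
  exact ⟨min r s, lt_min hr hs, (ball_subset_ball (min_le_left r s)).trans hrU,
    (ball_subset_ball (min_le_right r s)).trans hsU⟩

lemma segment_subset_thickening_segment {E : Type*} [SeminormedAddCommGroup E] [NormedSpace ℝ E]
    {a b b' : E} {δ : ℝ} (h : dist b' b < δ) : segment ℝ a b' ⊆ thickening δ (segment ℝ a b) := by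
  have hδ : 0 < δ := dist_nonneg.trans_lt h
  exact ((convex_segment a b).thickening δ).segment_subset
    (self_subset_thickening hδ _ (left_mem_segment ℝ a b))
    (mem_thickening_iff.2 ⟨b, right_mem_segment ℝ a b, h⟩)

lemma interior_closure_eq_of_convex_of_isOpen {E : Type*} [AddCommGroup E] [Module ℝ E]
    [TopologicalSpace E] [IsTopologicalAddGroup E] [ContinuousSMul ℝ E] {s : Set E}
    (hs : Convex ℝ s) (ho : IsOpen s) : interior (closure s) = s := by
  obtain rfl | hne := s.eq_empty_or_nonempty
  · simp
  · rw [hs.interior_closure_eq_interior_of_nonempty_interior (by rwa [ho.interior_eq]),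
      ho.interior_eq]

end Geometry

section ImaginaryProjection

variable {ι : Type*} {f : MvPolynomial ι ℂ} {r : ℝ} {a b : ι → ℝ}

/-- The imaginary projection `{Im z | f z = 0}` of `f`. Zero-freeness of `f` over a set `S` of
imaginary parts is expressed as `Disjoint S (imaginaryProjection f)`. -/
def imaginaryProjection (f : MvPolynomial ι ℂ) : Set (ι → ℝ) :=
  (fun z j ↦ (z j).im) '' {z | MvPolynomial.eval z f = 0}

lemma disjoint_imaginaryProjection_iff {S : Set (ι → ℝ)} :
    Disjoint S (imaginaryProjection f) ↔
      ∀ z : ι → ℂ, (fun j ↦ (z j).im) ∈ S → MvPolynomial.eval z f ≠ 0 := by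
  simp only [imaginaryProjection, disjoint_right, forall_mem_image, mem_ofPred_eq, ne_eq]
  exact forall_congr' fun z ↦ imp_not_comm

section Fintype

variable [Fintype ι]

-- The factor `2 * (f.totalDegree + 1)` brings the exponent `natDegree * ‖z - c‖ / r` of the
-- univariate estimate down to `1 / 2`, and `exp (1 / 2) - 1 < 1`.
lemma norm_eval_add_I_smul_sub_eval_le (hr : 0 < r) {z : ι → ℂ}
    (hz : Disjoint (ball (fun j ↦ (z j).im) r) (imaginaryProjection f)) {u : ι → ℝ}
    (hu : ‖u‖ ≤ r / (2 * (f.totalDegree + 1))) :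
    ‖MvPolynomial.eval (z + I • fun j ↦ (u j : ℂ)) f - MvPolynomial.eval z f‖ ≤
      (Real.exp (1 / 2) - 1) * ‖MvPolynomial.eval z f‖ := by
  set p := lineRestriction f z (I • fun j ↦ (u j : ℂ)) with hp
  set R : ℝ := 2 * (f.totalDegree + 1)
  have hR0 : 0 < R := by positivity
  have hne : ∀ w ∈ ball (0 : ℂ) R, p.eval w ≠ 0 := by
    intro w hw
    rw [hp, eval_lineRestriction]
    refine disjoint_imaginaryProjection_iff.1 hz _ ?_
    have him : (fun j ↦ ((z + w • I • fun j ↦ (u j : ℂ)) j).im) =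
        (fun j ↦ (z j).im) + w.re • u := by
      ext j; simp
    rw [him, mem_ball_iff_norm, add_sub_cancel_left, norm_smul, Real.norm_eq_abs]
    calc |w.re| * ‖u‖ ≤ ‖w‖ * (r / R) :=
          mul_le_mul (abs_re_le_norm w) hu (norm_nonneg _) (norm_nonneg _)
      _ < R * (r / R) := by gcongr; exact mem_ball_zero_iff.1 hw
      _ = r := mul_div_cancel₀ r hR0.ne'
  have hexp : p.natDegree * (‖(1 : ℂ) - 0‖ / R) ≤ 1 / 2 := by
    have : (p.natDegree : ℝ) ≤ f.totalDegree := by exact_mod_cast natDegree_lineRestriction_le ..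
    rw [sub_zero, norm_one, mul_one_div, div_le_iff₀ hR0]
    linarith
  calc _ = ‖p.eval 1 - p.eval 0‖ := by simp [hp, eval_lineRestriction]
    _ ≤ (Real.exp (p.natDegree * (‖(1 : ℂ) - 0‖ / R)) - 1) * ‖p.eval 0‖ :=
        norm_eval_sub_eval_le_of_forall_mem_ball_ne_zero (IsAlgClosed.splits p) hR0 hne 1
    _ ≤ (Real.exp (1 / 2) - 1) * ‖MvPolynomial.eval z f‖ := by
        rw [hp, eval_lineRestriction, zero_smul, add_zero, ← hp]
        gcongr

lemma norm_eval_add_I_smul_sub_eval_le_of_mem_segment (hr : 0 < r)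
    (hab : Disjoint (segment ℝ a b) (imaginaryProjection f))
    (ha : Disjoint (ball a r) (imaginaryProjection f))
    (hb : Disjoint (ball b r) (imaginaryProjection f))
    {z : ι → ℂ} (hz : (fun j ↦ (z j).im) ∈ segment ℝ a b) {u : ι → ℝ}
    (hu : ‖u‖ ≤ r / (2 * (f.totalDegree + 1))) :
    ‖MvPolynomial.eval (z + I • fun j ↦ (u j : ℂ)) f - MvPolynomial.eval z f‖ ≤
      (Real.exp (1 / 2) - 1) * ‖MvPolynomial.eval z f‖ := by
  obtain ⟨t, ht, hzt⟩ := (segment_eq_image' ℝ a b).le hz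
  set c : ι → ℂ := fun j ↦ (z j).re + a j * I with hc
  set v : ι → ℂ := fun j ↦ (b - a) j with hv
  have him (w : ℂ) : (fun j ↦ ((c + w • v) j).im) = a + w.im • (b - a) := by
    ext j; simp [hc, hv]
  have hline : c + (t * I) • v = z := by
    ext j
    exact Complex.ext (by simp [hc, hv]) (by simpa [hc, hv] using congrFun hzt j)
  set q := lineRestriction f c v
  set p := lineRestriction f (c + I • fun j ↦ (u j : ℂ)) v - q with hp
  have hq_eval (w : ℂ) : q.eval w = MvPolynomial.eval (c + w • v) f :=
    eval_lineRestriction f c v w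
  have hp_eval (w : ℂ) : p.eval w = MvPolynomial.eval (c + w • v + I • fun j ↦ (u j : ℂ)) f -
      MvPolynomial.eval (c + w • v) f := by
    rw [hp, eval_sub, hq_eval, eval_lineRestriction, add_right_comm]
  have hq_ne (w : ℂ) (hw : w.im ∈ Icc 0 1) : q.eval w ≠ 0 := by
    rw [hq_eval]
    refine disjoint_imaginaryProjection_iff.1 hab _ ?_
    rw [him, segment_eq_image']
    exact mem_image_of_mem _ hw
  have hboundary (w : ℂ) (hw : Disjoint (ball (a + w.im • (b - a)) r) (imaginaryProjection f)) :
      ‖p.eval w‖ ≤ (Real.exp (1 / 2) - 1) * ‖q.eval w‖ := by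
    rw [hp_eval, hq_eval]
    exact norm_eval_add_I_smul_sub_eval_le hr (by rwa [him]) hu
  have hstrip := norm_eval_le_mul_norm_eval_of_horizontal_strip zero_lt_one hq_ne
    (fun w hw ↦ hboundary w (by simpa [hw] using ha))
    (fun w hw ↦ hboundary w (by simpa [hw] using hb)) (z := t * I) (by simpa using ht)
  rwa [hp_eval, hq_eval, hline] at hstrip

lemma disjoint_thickening_segment_imaginaryProjection (hr : 0 < r)
    (hab : Disjoint (segment ℝ a b) (imaginaryProjection f))
    (ha : Disjoint (ball a r) (imaginaryProjection f))
    (hb : Disjoint (ball b r) (imaginaryProjection f)) :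
    Disjoint (thickening (r / (2 * (f.totalDegree + 1))) (segment ℝ a b))
      (imaginaryProjection f) := by
  refine disjoint_imaginaryProjection_iff.2 fun z hz hzero ↦ ?_
  obtain ⟨s, hs, hzs⟩ := mem_thickening_iff.1 hz
  set u : ι → ℝ := (fun j ↦ (z j).im) - s with hu
  set z' : ι → ℂ := z - I • fun j ↦ (u j : ℂ) with hz'
  have him : (fun j ↦ (z' j).im) = s := by
    ext j; simp [hz', hu]
  have hne : MvPolynomial.eval z' f ≠ 0 := disjoint_imaginaryProjection_iff.1 hab z' (him ▸ hs)
  have hle := norm_eval_add_I_smul_sub_eval_le_of_mem_segment hr hab ha hb (z := z') (him ▸ hs)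
    (u := u) (by rw [hu, ← dist_eq_norm]; exact hzs.le)
  rw [hz', sub_add_cancel, hzero, zero_sub, norm_neg, ← hz'] at hle
  have hexp : Real.exp (1 / 2) < 2 :=
    (Real.exp_bound_div_one_sub_of_interval' (by norm_num) (by norm_num)).trans_eq (by norm_num)
  nlinarith [norm_pos_iff.2 hne]

lemma disjoint_segment_imaginaryProjection_of_dist_lt (hr : 0 < r)
    (hab : Disjoint (segment ℝ a b) (imaginaryProjection f))
    (ha : Disjoint (ball a r) (imaginaryProjection f))
    (hb : Disjoint (ball b r) (imaginaryProjection f)) {b' : ι → ℝ}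
    (hb' : dist b' b < r / (2 * (f.totalDegree + 1))) :
    Disjoint (segment ℝ a b') (imaginaryProjection f) :=
  (disjoint_thickening_segment_imaginaryProjection hr hab ha hb).mono_left
    (segment_subset_thickening_segment hb')

end Fintype

variable [Finite ι]

lemma disjoint_segment_imaginaryProjection {U : Set (ι → ℝ)} (hU : IsOpen U)
    (hconn : IsPreconnected U) (hf : Disjoint U (imaginaryProjection f)) (ha : a ∈ U)
    (hb : b ∈ U) : Disjoint (segment ℝ a b) (imaginaryProjection f) := by
  cases nonempty_fintype ι
  suffices h : ∀ x ∈ U, ∀ᶠ y in 𝓝[U] x,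
      (Disjoint (segment ℝ a x) (imaginaryProjection f) →
        Disjoint (segment ℝ a y) (imaginaryProjection f)) ∧
      (Disjoint (segment ℝ a y) (imaginaryProjection f) →
        Disjoint (segment ℝ a x) (imaginaryProjection f)) from
    hconn.induction₂' _ h (fun _ _ _ _ _ _ h₁ h₂ ↦ h₂ ∘ h₁) ha hb
      (by simpa using hf.mono_left (singleton_subset_iff.2 ha))
  intro x hx
  obtain ⟨r, hr, har, hxr⟩ := exists_ball_subset_and_ball_subset hU ha hx
  set δ : ℝ := r / 2 / (2 * (f.totalDegree + 1))
  have hδ0 : 0 < δ := by positivity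
  filter_upwards [mem_nhdsWithin_of_mem_nhds (ball_mem_nhds x hδ0),
    mem_nhdsWithin_of_mem_nhds (ball_mem_nhds x (half_pos hr))] with y hyδ hyr
  have ha' := hf.mono_left ((ball_subset_ball (half_le_self hr.le)).trans har)
  have hx' := hf.mono_left ((ball_subset_ball (half_le_self hr.le)).trans hxr)
  have hy' := hf.mono_left ((ball_half_subset y hyr).trans hxr)
  exact ⟨fun h ↦ disjoint_segment_imaginaryProjection_of_dist_lt (half_pos hr) h ha' hx' hyδ,
    fun h ↦ disjoint_segment_imaginaryProjection_of_dist_lt (half_pos hr) h ha' hy'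
      (mem_ball'.1 hyδ)⟩

theorem convex_connectedComponentIn_compl_closure_imaginaryProjection (f : MvPolynomial ι ℂ)
    (x : ι → ℝ) : Convex ℝ (connectedComponentIn (closure (imaginaryProjection f))ᶜ x) := by
  cases nonempty_fintype ι
  set C := connectedComponentIn (closure (imaginaryProjection f))ᶜ x with hC
  have hCo : IsOpen C := isClosed_closure.isOpen_compl.connectedComponentIn
  have hCdisj : Disjoint C (imaginaryProjection f) :=
    (disjoint_compl_left.mono_right subset_closure).mono_left (connectedComponentIn_subset _ _)
  rw [convex_iff_segment_subset]
  intro a ha b hb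
  obtain ⟨r, hr, har, hbr⟩ := exists_ball_subset_and_ball_subset hCo ha hb
  have hthick := disjoint_thickening_segment_imaginaryProjection hr
    (disjoint_segment_imaginaryProjection hCo isPreconnected_connectedComponentIn hCdisj ha hb)
    (hCdisj.mono_left har) (hCdisj.mono_left hbr)
  set T := thickening (r / (2 * (f.totalDegree + 1))) (segment ℝ a b)
  have hseg : segment ℝ a b ⊆ T := self_subset_thickening (by positivity) _
  have hTC : T ⊆ C := by
    rw [hC, connectedComponentIn_eq ha]
    exact ((convex_segment a b).thickening _).isPreconnected.subset_connectedComponentIn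
      (hseg (left_mem_segment ℝ a b))
      (subset_compl_iff_disjoint_right.2 (hthick.closure_right isOpen_thickening))
  exact hseg.trans hTC

theorem disjoint_convexHull_imaginaryProjection {U : Set (ι → ℝ)} (hU : IsOpen U)
    (hconn : IsPreconnected U) (hf : Disjoint U (imaginaryProjection f)) :
    Disjoint (convexHull ℝ U) (imaginaryProjection f) := by
  obtain rfl | ⟨x, hx⟩ := U.eq_empty_or_nonempty
  · simp
  have hUC : U ⊆ connectedComponentIn (closure (imaginaryProjection f))ᶜ x :=
    hconn.subset_connectedComponentIn hx
      (subset_compl_iff_disjoint_right.2 (hf.closure_right hU))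
  have hcompl : Disjoint (closure (imaginaryProjection f))ᶜ (imaginaryProjection f) :=
    disjoint_compl_left.mono_right subset_closure
  exact hcompl.mono_left <|
    (convexHull_min hUC (convex_connectedComponentIn_compl_closure_imaginaryProjection f x)).trans
      (connectedComponentIn_subset _ _)

end ImaginaryProjection

theorem stmt2_general {n : ℕ} (K : Set (Fin n → ℝ)) (hKint : IsPreconnected (interior K))
    (f : MvPolynomial (Fin n) ℂ) (hf : KStable K f) :
    KStable (closure (convexHull ℝ (interior K))) f := by
  refine disjoint_imaginaryProjection_iff.1 ?_
  rw [interior_closure_eq_of_convex_of_isOpen (convex_convexHull ℝ _) isOpen_interior.convexHull]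
  exact disjoint_convexHull_imaginaryProjection isOpen_interior hKint
    (disjoint_imaginaryProjection_iff.2 hf)

/-- If `f` is `K`-stable for a non-convex cone `K` with non-empty connected interior,
then `f` is `cl(conv(int K))`-stable. -/
theorem stmt2 {n : ℕ} (K : Set (Fin n → ℝ))
    (hKcone : ∀ (c : ℝ), 0 < c → ∀ x ∈ K, c • x ∈ K)
    (hKnconv : ¬ Convex ℝ K)
    (hKint : IsConnected (interior K))
    (f : MvPolynomial (Fin n) ℂ) (hf : KStable K f) :
    KStable (closure (convexHull ℝ (interior K))) f :=
  stmt2_general K hKint.isPreconnected f hf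
end

section
/- If h = g + i·f is K-stable, where f, g ∈ ℝ[z₁,…,zₙ], then each of f and g is K-stable or identically zero. -/
open MvPolynomial

/-!
Write `h*` for `h` with conjugated coefficients, so that `h* = g - i f` when `h = g + i f` with
`f`, `g` real. On a line `t ↦ x + t y` with `y` in the interior of the cone, a stable `h` is a
univariate polynomial all of whose roots have nonpositive imaginary part. Each root is at least as
close to `t` as to its conjugate when `t` is in the upper half plane, so `|h*| ≤ |h|` on the tube
over the interior of the cone. If `f` or `g` vanishes at a point of the tube, then `h* = ± h` at
that point, the quotient `h* / h` attains its maximal modulus there, and by the maximum modulus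
principle `h* = ± h` nearby, hence as polynomials, which says that `f` or `g` is zero.
-/

open Filter Topology ComplexConjugate

lemma norm_conj_sub_le_norm_sub {t a : ℂ} (ht : 0 ≤ t.im) (ha : a.im ≤ 0) :
    ‖conj t - a‖ ≤ ‖t - a‖ := by
  rw [← sq_le_sq₀ (norm_nonneg _) (norm_nonneg _), Complex.sq_norm, Complex.sq_norm,
    Complex.normSq_apply, Complex.normSq_apply]
  simp only [Complex.sub_re, Complex.sub_im, Complex.conj_re, Complex.conj_im]
  nlinarith [mul_nonpos_of_nonneg_of_nonpos ht ha]

lemma polynomial_norm_eval_conj_le {p : Polynomial ℂ} (hp : ∀ t : ℂ, 0 < t.im → p.eval t ≠ 0)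
    {t : ℂ} (ht : 0 ≤ t.im) : ‖p.eval (conj t)‖ ≤ ‖p.eval t‖ := by
  have root_im_nonpos : ∀ a ∈ p.roots, a.im ≤ 0 := fun a ha =>
    not_lt.1 fun ha_im => hp a ha_im (Polynomial.isRoot_of_mem_roots ha)
  have norm_eval : ∀ s : ℂ,
      ‖p.eval s‖ = ‖p.leadingCoeff‖ * (p.roots.map fun a => ‖s - a‖).prod := fun s => by
    rw [(IsAlgClosed.splits p).eval_eq_prod_roots, norm_mul]
    exact congrArg _ (Multiset.prod_hom' p.roots normHom (s - ·)).symm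
  rw [norm_eval, norm_eval]
  gcongr
  exact Multiset.prod_map_le_prod_map₀ _ _ (fun _ _ => norm_nonneg _) fun a ha =>
    norm_conj_sub_le_norm_sub ht (root_im_nonpos a ha)

section MvPolynomialEval

variable {σ : Type*}

lemma polynomial_eval_aeval {R : Type*} [CommSemiring R] (q : σ → Polynomial R)
    (h : MvPolynomial σ R) (t : R) : (aeval q h).eval t = eval (fun j => (q j).eval t) h := by
  simpa only [Polynomial.coe_aeval_eq_eval, aeval_eq_eval] using
    comp_aeval_apply (f := q) (Polynomial.aeval t) h

lemma eq_of_eventually_eval_eq {R : Type*} [CommRing R] [IsDomain R] [TopologicalSpace R]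
    [T1Space R] {p q : MvPolynomial σ R} {z : σ → R} [∀ j, (𝓝[≠] z j).NeBot]
    (hpq : ∀ᶠ w in 𝓝 z, eval w p = eval w q) : p = q := by
  rw [nhds_pi] at hpq
  obtain ⟨I, -, s, hs, hsub⟩ := Filter.mem_pi.1 hpq
  exact funext_set s (fun j => infinite_of_mem_nhds (z j) (hs j)) fun w hw =>
    hsub fun j _ => hw j trivial

lemma mvPolynomial_norm_eval_map_conj_le {h : MvPolynomial σ ℂ} {z : σ → ℂ}
    (hz : ∀ t : ℂ, 0 < t.im → eval (fun j => ((z j).re + (z j).im * t : ℂ)) h ≠ 0) :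
    ‖eval z (h.map conj)‖ ≤ ‖eval z h‖ := by
  let line : σ → Polynomial ℂ := fun j => .C ((z j).re : ℂ) + .C ((z j).im : ℂ) * .X
  have eval_line : ∀ t : ℂ,
      (aeval line h).eval t = eval (fun j => ((z j).re + (z j).im * t : ℂ)) h := fun t => by
    simp only [polynomial_eval_aeval, line, Polynomial.eval_add, Polynomial.eval_mul,
      Polynomial.eval_C, Polynomial.eval_X]
  have eval_line_I : (aeval line h).eval Complex.I = eval z h := by
    simp only [eval_line, Complex.re_add_im]
  have conj_eval_line : conj ((aeval line h).eval (conj Complex.I)) = eval z (h.map conj) := by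
    rw [eval_line, map_eval]
    congr 2
    ext j
    simp [Complex.re_add_im]
  have norm_le := polynomial_norm_eval_conj_le (p := aeval line h) (t := Complex.I)
    (fun t ht => eval_line t ▸ hz t ht) (by simp)
  rwa [eval_line_I, ← Complex.norm_conj, conj_eval_line] at norm_le

lemma map_conj_add_C_I_mul (f g : MvPolynomial σ ℝ) :
    (g.map (algebraMap ℝ ℂ) + C Complex.I * f.map (algebraMap ℝ ℂ)).map conj =
      g.map (algebraMap ℝ ℂ) - C Complex.I * f.map (algebraMap ℝ ℂ) := by
  have conj_comp : (conj : ℂ →+* ℂ).comp (algebraMap ℝ ℂ) = algebraMap ℝ ℂ :=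
    RingHom.ext Complex.conj_ofReal
  simp only [map_add, map_mul, MvPolynomial.map_map, conj_comp, map_C, Complex.conj_I, map_neg,
    neg_mul, sub_eq_add_neg]

end MvPolynomialEval

lemma eventually_eq_const_mul_of_norm_le {E : Type*} [NormedAddCommGroup E] [NormedSpace ℂ E]
    {a b : E → ℂ} {z : E} {c : ℂ} (ha : ∀ᶠ w in 𝓝 z, DifferentiableAt ℂ a w)
    (hb : ∀ᶠ w in 𝓝 z, DifferentiableAt ℂ b w) (hle : ∀ᶠ w in 𝓝 z, ‖a w‖ ≤ ‖b w‖)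
    (hbz : b z ≠ 0) (hc : ‖c‖ = 1) (hz : a z = c * b z) : ∀ᶠ w in 𝓝 z, a w = c * b w := by
  have b_ne_zero : ∀ᶠ w in 𝓝 z, b w ≠ 0 := hb.self_of_nhds.continuousAt.eventually_ne hbz
  have quotient_at : a z / b z = c := (div_eq_iff hbz).2 hz
  have quotient_differentiable : ∀ᶠ w in 𝓝 z, DifferentiableAt ℂ (fun w => a w / b w) w := by
    filter_upwards [ha, hb, b_ne_zero] with w haw hbw hw
    simpa only [div_eq_mul_inv] using haw.fun_mul (hbw.fun_inv hw)
  have quotient_max : IsLocalMax (norm ∘ fun w => a w / b w) z := by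
    filter_upwards [hle] with w hw
    simpa only [Function.comp_apply, quotient_at, hc, norm_div] using
      div_le_one_of_le₀ hw (norm_nonneg _)
  filter_upwards [Complex.eventually_eq_of_isLocalMax_norm quotient_differentiable quotient_max,
    b_ne_zero] with w hw hbw
  exact (div_eq_iff hbw).1 (hw.trans quotient_at)

namespace KStable

variable {n : ℕ} {K : Set (Fin n → ℝ)} {h : MvPolynomial (Fin n) ℂ} {z : Fin n → ℂ}

lemma norm_eval_map_conj_le (hK : ∀ c : ℝ, 0 < c → ∀ x ∈ K, c • x ∈ K) (h_stable : KStable K h)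
    (hz : (fun j => (z j).im) ∈ interior K) : ‖eval z (h.map conj)‖ ≤ ‖eval z h‖ := by
  refine mvPolynomial_norm_eval_map_conj_le fun t ht => h_stable _ ?_
  have smul_mem := (isOpenMap_smul₀ ht.ne').mapsTo_interior (hK t.im ht) hz
  simpa [mul_comm, Pi.smul_def] using smul_mem

lemma map_conj_eq_C_mul (hK : ∀ c : ℝ, 0 < c → ∀ x ∈ K, c • x ∈ K) (h_stable : KStable K h)
    (hz : (fun j => (z j).im) ∈ interior K) {c : ℂ} (hc : ‖c‖ = 1)
    (h_eval : eval z (h.map conj) = c * eval z h) : h.map conj = C c * h := by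
  have differentiable_eval (p : MvPolynomial (Fin n) ℂ) :
      ∀ᶠ w in 𝓝 z, DifferentiableAt ℂ (fun w => eval w p) w :=
    .of_forall fun w => (AnalyticOnNhd.eval_mvPolynomial p w trivial).differentiableAt
  have tube_mem_nhds : ∀ᶠ w in 𝓝 z, (fun j => (w j).im) ∈ interior K :=
    (isOpen_interior.preimage (by fun_prop)).mem_nhds hz
  refine eq_of_eventually_eval_eq (z := z) ?_
  simpa only [map_mul, eval_C] using eventually_eq_const_mul_of_norm_le
    (differentiable_eval (h.map conj)) (differentiable_eval h)
    (tube_mem_nhds.mono fun w hw => h_stable.norm_eval_map_conj_le hK hw)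
    (h_stable z hz) hc h_eval

end KStable

lemma not_kStable_iff {n : ℕ} {K : Set (Fin n → ℝ)} {h : MvPolynomial (Fin n) ℂ} :
    ¬KStable K h ↔ ∃ z : Fin n → ℂ, (fun j => (z j).im) ∈ interior K ∧ eval z h = 0 := by
  simp only [KStable, not_forall, not_not, exists_prop]

theorem stmt9_general {n : ℕ} (K : Set (Fin n → ℝ))
    (hK : ∀ c : ℝ, 0 < c → ∀ x ∈ K, c • x ∈ K) (f g : MvPolynomial (Fin n) ℝ)
    (h : KStable K (g.map (algebraMap ℝ ℂ) + C Complex.I * f.map (algebraMap ℝ ℂ))) :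
    (KStable K (f.map (algebraMap ℝ ℂ)) ∨ f = 0) ∧
      (KStable K (g.map (algebraMap ℝ ℂ)) ∨ g = 0) := by
  have map_inj := map_injective (σ := Fin n) (algebraMap ℝ ℂ) (algebraMap ℝ ℂ).injective
  refine ⟨or_iff_not_imp_left.2 fun f_not_stable => ?_,
    or_iff_not_imp_left.2 fun g_not_stable => ?_⟩
  · obtain ⟨z, hz, f_eval⟩ := not_kStable_iff.1 f_not_stable
    have conj_eq := h.map_conj_eq_C_mul hK hz (c := 1) (by simp)
      (by simp [map_conj_add_C_I_mul, f_eval])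
    rw [map_conj_add_C_I_mul, C_1, one_mul] at conj_eq
    have two_mul_eq_zero : 2 * (C Complex.I * f.map (algebraMap ℝ ℂ)) = 0 := by
      linear_combination -conj_eq
    simpa [map_eq_zero_iff _ map_inj] using two_mul_eq_zero
  · obtain ⟨z, hz, g_eval⟩ := not_kStable_iff.1 g_not_stable
    have conj_eq := h.map_conj_eq_C_mul hK hz (c := -1) (by simp)
      (by simp [map_conj_add_C_I_mul, g_eval])
    rw [map_conj_add_C_I_mul, C_neg, C_1, neg_one_mul] at conj_eq
    have two_mul_eq_zero : 2 * g.map (algebraMap ℝ ℂ) = 0 := by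
      linear_combination conj_eq
    simpa [map_eq_zero_iff _ map_inj] using two_mul_eq_zero

/-- If `g + i f` is `K`-stable (with `f, g` real), then each of `f` and `g` is
`K`-stable or identically zero. -/
theorem stmt9 {n : ℕ} (K : Set (Fin n → ℝ))
    (hKcl : IsClosed K) (hKconv : Convex ℝ K)
    (hKcone : ∀ (c : ℝ), 0 ≤ c → ∀ x ∈ K, c • x ∈ K)
    (hKpointed : K ∩ (-K) ⊆ {0}) (hKfull : (interior K).Nonempty)
    (f g : MvPolynomial (Fin n) ℝ)
    (h : KStable K (g.map (algebraMap ℝ ℂ) + C Complex.I * f.map (algebraMap ℝ ℂ))) :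
    (KStable K (f.map (algebraMap ℝ ℂ)) ∨ f = 0) ∧
      (KStable K (g.map (algebraMap ℝ ℂ)) ∨ g = 0) :=
  stmt9_general K (fun c hc => hKcone c hc.le) f g h
end

section
/- Let f, g ∈ ℝ[z₁,…,zₙ] be nonzero and K ⊂ ℝⁿ a proper cone. Suppose λf + μg is K-stable or zero for all λ, μ ∈ ℝ, and the directional Wronskian W_v(f,g) = (∂_v f)·g − f·(∂_v g) is ≤ 0 on ℝⁿ for all v ∈ int K. Then g + i·f is K-stable. -/
open MvPolynomial

noncomputable def dirDeriv {n : ℕ} (v : Fin n → ℝ) (h : MvPolynomial (Fin n) ℝ) :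
    MvPolynomial (Fin n) ℝ :=
  ∑ j, C (v j) * pderiv j h

noncomputable def wronskian {n : ℕ} (v : Fin n → ℝ) (f g : MvPolynomial (Fin n) ℝ) :
    MvPolynomial (Fin n) ℝ :=
  dirDeriv v f * g - f * dirDeriv v g

/-!
Fix `z` with `v := Im z ∈ int K` and restrict `f` and `g` to the complex line `w ↦ Re z + w • v`,
which passes through `z` at `w = i`. This gives real univariate polynomials `F` and `G`, and
`W_v(f,g)` restricts to `F' G - F G'`. As `K` is a cone, the upper half-plane is sent to points
with imaginary part in `int K`, so, unless `f` and `g` are proportional (an easy case), no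
nontrivial real combination of `F` and `G` vanishes there. Hence `Im (G conj F)` has no zero in
the upper half-plane and, by connectedness, constant sign. To first order in `s`, its value at
`t + i s` is `-s (F' G - F G')(t)`. The Wronskian is nonpositive, and it is not identically zero
because otherwise `F` and `G` would be proportional; so the sign is positive. But `G + i F`
vanishing at `i` would give `Im (G conj F) = -|F|² ≤ 0` there.
-/

open scoped Polynomial ComplexConjugate

section RestrictLine

variable {σ R : Type*} [CommSemiring R]

/-- The restriction of a multivariate polynomial to the parametrized line `w ↦ x + w • v`, as a
univariate polynomial in the parameter `w`. It reduces several variables to one. -/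
noncomputable def restrictLine (x v : σ → R) : MvPolynomial σ R →ₐ[R] R[X] :=
  aeval fun j => Polynomial.C (x j) + Polynomial.C (v j) * Polynomial.X

@[simp]
lemma restrictLine_X (x v : σ → R) (j : σ) :
    restrictLine x v (X j) = Polynomial.C (x j) + Polynomial.C (v j) * Polynomial.X :=
  aeval_X _ j

lemma aeval_restrictLine {A : Type*} [CommSemiring A] [Algebra R A] (x v : σ → R)
    (h : MvPolynomial σ R) (w : A) :
    Polynomial.aeval w (restrictLine x v h) =
      aeval (fun j => algebraMap R A (x j) + algebraMap R A (v j) * w) h := by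
  have hcomp : (Polynomial.aeval w).comp (restrictLine x v) =
      aeval fun j => algebraMap R A (x j) + algebraMap R A (v j) * w := by
    ext j
    simp
  exact DFunLike.congr_fun hcomp h

lemma aeval_I_restrictLine (z : σ → ℂ) (h : MvPolynomial σ ℝ) :
    Polynomial.aeval Complex.I (restrictLine (fun j => (z j).re) (fun j => (z j).im) h) =
      eval z (h.map (algebraMap ℝ ℂ)) := by
  simp only [aeval_restrictLine, Complex.coe_algebraMap, Complex.re_add_im, eval_map, aeval_def]

end RestrictLine

section Wronskian

variable {n : ℕ} (v : Fin n → ℝ)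

lemma dirDeriv_C (a : ℝ) : dirDeriv v (C a) = 0 := by
  simp [dirDeriv]

lemma dirDeriv_add (p q : MvPolynomial (Fin n) ℝ) :
    dirDeriv v (p + q) = dirDeriv v p + dirDeriv v q := by
  simp only [dirDeriv, map_add, mul_add, Finset.sum_add_distrib]

lemma dirDeriv_X (i : Fin n) : dirDeriv v (X i) = C (v i) := by
  simp [dirDeriv, pderiv_X, Pi.single_apply]

lemma dirDeriv_mul (p q : MvPolynomial (Fin n) ℝ) :
    dirDeriv v (p * q) = dirDeriv v p * q + p * dirDeriv v q := by
  simp only [dirDeriv, pderiv_mul, Finset.sum_mul, Finset.mul_sum, ← Finset.sum_add_distrib]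
  exact Finset.sum_congr rfl fun j _ => by ring

lemma derivative_restrictLine (x : Fin n → ℝ) (h : MvPolynomial (Fin n) ℝ) :
    (restrictLine x v h).derivative = restrictLine x v (dirDeriv v h) := by
  induction h using MvPolynomial.induction_on with
  | C a => simp [dirDeriv_C, ← algebraMap_eq]
  | add p q hp hq => simp only [dirDeriv_add, map_add, hp, hq]
  | mul_X p i hp => simp [dirDeriv_mul, dirDeriv_X, hp, ← algebraMap_eq]

lemma restrictLine_wronskian (x : Fin n → ℝ) (f g : MvPolynomial (Fin n) ℝ) :
    restrictLine x v (wronskian v f g) =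
      Polynomial.wronskian (restrictLine x v g) (restrictLine x v f) := by
  simp only [wronskian, Polynomial.wronskian, derivative_restrictLine, map_sub, map_mul]
  ring

lemma eval_wronskian_restrictLine (x : Fin n → ℝ) (f g : MvPolynomial (Fin n) ℝ) (t : ℝ) :
    (Polynomial.wronskian (restrictLine x v g) (restrictLine x v f)).eval t =
      eval (fun j => x j + v j * t) (wronskian v f g) := by
  rw [← restrictLine_wronskian, ← Polynomial.coe_aeval_eq_eval, aeval_restrictLine,
    ← coe_aeval_eq_eval]
  rfl

end Wronskian

lemma polynomial_wronskian_mul_mul {R : Type*} [CommRing R] (d a b : R[X]) :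
    Polynomial.wronskian (d * a) (d * b) = d ^ 2 * Polynomial.wronskian a b := by
  simp only [Polynomial.wronskian, Polynomial.derivative_mul]
  ring

lemma exists_eq_C_mul_of_polynomial_wronskian_eq_zero {k : Type*} [Field k] [CharZero k]
    {p q : k[X]} (hq : q ≠ 0) (hw : Polynomial.wronskian p q = 0) :
    ∃ c : k, p = Polynomial.C c * q := by
  classical
  let := EuclideanDomain.gcdMonoid k[X]
  have hd : gcd p q ≠ 0 := gcd_ne_zero_of_right hq
  obtain ⟨a, b, ha, hb, hunit⟩ := extract_gcd p q
  generalize gcd p q = d at ha hb hd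
  subst ha hb
  have hab : IsCoprime a b := (gcd_isUnit_iff a b).mp hunit
  have hwab : Polynomial.wronskian a b = 0 := by
    rw [polynomial_wronskian_mul_mul] at hw
    exact (mul_eq_zero.mp hw).resolve_left (pow_ne_zero 2 hd)
  obtain ⟨ha', hb'⟩ := hab.wronskian_eq_zero_iff.mp hwab
  obtain ⟨α, rfl⟩ : ∃ α, a = Polynomial.C α := ⟨_, Polynomial.eq_C_of_derivative_eq_zero ha'⟩
  obtain ⟨β, rfl⟩ : ∃ β, b = Polynomial.C β := ⟨_, Polynomial.eq_C_of_derivative_eq_zero hb'⟩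
  have hβ : β ≠ 0 := Polynomial.C_ne_zero.mp (right_ne_zero_of_mul hq)
  refine ⟨α / β, ?_⟩
  rw [mul_left_comm, ← map_mul, div_mul_cancel₀ α hβ]

lemma exists_eq_ofReal_mul_of_im_mul_conj_eq_zero {a b : ℂ} (hb : b ≠ 0)
    (h : (a * conj b).im = 0) : ∃ r : ℝ, a = r * b := by
  refine ⟨(a / b).re, ?_⟩
  have him : (a / b).im = 0 := by
    rw [div_eq_mul_inv, Complex.inv_def, ← mul_assoc, Complex.im_mul_ofReal, h, zero_mul]
  rw [Complex.conj_eq_iff_re.mp (Complex.conj_eq_iff_im.mpr him), div_mul_cancel₀ a hb]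

lemma add_I_mul_ne_zero_of_im_mul_conj_pos {a b : ℂ} (h : 0 < (a * conj b).im) :
    a + Complex.I * b ≠ 0 := by
  intro hab
  have ha : a * conj b = -(Complex.normSq b * Complex.I) := by
    rw [← Complex.mul_conj]
    linear_combination conj b * hab
  rw [ha] at h
  simp only [Complex.neg_im, Complex.im_ofReal_mul, Complex.I_im] at h
  linarith [Complex.normSq_nonneg b]

/-- The function `w ↦ Im (G(w) conj F(w)) = |F(w)|² Im (G(w) / F(w))`. It carries the sign of
`Im (G / F)` but is defined and smooth also at the zeros of `F`. -/
noncomputable def imMulConj (G F : ℝ[X]) (w : ℂ) : ℝ :=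
  (Polynomial.aeval w G * conj (Polynomial.aeval w F)).im

lemma continuous_imMulConj (G F : ℝ[X]) : Continuous (imMulConj G F) := by
  unfold imMulConj
  fun_prop

lemma aeval_complex_ofReal (P : ℝ[X]) (t : ℝ) :
    Polynomial.aeval (t : ℂ) P = (P.eval t : ℝ) :=
  Polynomial.aeval_ofReal P t

lemma imMulConj_ofReal (G F : ℝ[X]) (t : ℝ) : imMulConj G F t = 0 := by
  simp [imMulConj, aeval_complex_ofReal]

lemma imMulConj_C_mul_self (c : ℝ) (F : ℝ[X]) (w : ℂ) :
    imMulConj (Polynomial.C c * F) F w = 0 := by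
  simp [imMulConj, mul_assoc, Complex.mul_conj]

lemma wronskian_ne_zero_of_imMulConj_ne_zero {G F : ℝ[X]} {w : ℂ} (h : imMulConj G F w ≠ 0) :
    Polynomial.wronskian G F ≠ 0 := by
  intro hw
  have hF : F ≠ 0 := by
    rintro rfl
    simp [imMulConj] at h
  obtain ⟨c, rfl⟩ := exists_eq_C_mul_of_polynomial_wronskian_eq_zero hF hw
  exact h (imMulConj_C_mul_self c F w)

lemma hasDerivAt_aeval_add_mul_I (P : ℝ[X]) (t : ℝ) :
    HasDerivAt (fun s : ℝ => Polynomial.aeval (t + s * Complex.I) P)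
      ((P.derivative.eval t : ℝ) * Complex.I) 0 := by
  have hline : HasDerivAt (fun s : ℝ => (t + s * Complex.I : ℂ)) Complex.I 0 := by
    simpa using ((Complex.ofRealCLM.hasDerivAt (x := 0)).mul_const Complex.I).const_add (t : ℂ)
  refine ((P.hasDerivAt_aeval _).comp (0 : ℝ) hline).congr_deriv ?_
  simp [aeval_complex_ofReal]

lemma hasDerivAt_imMulConj_add_mul_I (G F : ℝ[X]) (t : ℝ) :
    HasDerivAt (fun s : ℝ => imMulConj G F (t + s * Complex.I))
      (-(Polynomial.wronskian G F).eval t) 0 := by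
  have hmul := (hasDerivAt_aeval_add_mul_I G t).mul (hasDerivAt_aeval_add_mul_I F t).star
  refine (Complex.imCLM.hasFDerivAt.comp_hasDerivAt (0 : ℝ) hmul).congr_deriv ?_
  simp [Polynomial.wronskian, aeval_complex_ofReal, mul_comm, sub_eq_add_neg]

lemma exists_imMulConj_pos_of_wronskian_neg {G F : ℝ[X]} {t : ℝ}
    (ht : (Polynomial.wronskian G F).eval t < 0) : ∃ w : ℂ, 0 < w.im ∧ 0 < imMulConj G F w := by
  have hderiv := hasDerivAt_imMulConj_add_mul_I G F t
  have hsign := eventually_nhdsWithin_sign_eq_of_deriv_pos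
    (hderiv.deriv.symm ▸ neg_pos.mpr ht) (by simp [imMulConj_ofReal])
  obtain ⟨s, hs, hs0⟩ :=
    ((hsign.filter_mono nhdsWithin_le_nhds).and (self_mem_nhdsWithin (s := Set.Ioi 0))).exists
  replace hs0 : 0 < s := hs0
  refine ⟨t + s * Complex.I, by simpa using hs0, ?_⟩
  rwa [sub_zero, sign_pos hs0, sign_eq_one_iff] at hs

theorem imMulConj_pos_of_wronskian_nonpos {G F : ℝ[X]}
    (hne : ∀ w : ℂ, 0 < w.im → imMulConj G F w ≠ 0)
    (hW : ∀ t : ℝ, (Polynomial.wronskian G F).eval t ≤ 0) {w : ℂ} (hw : 0 < w.im) :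
    0 < imMulConj G F w := by
  obtain ⟨t, ht⟩ : ∃ t : ℝ, (Polynomial.wronskian G F).eval t ≠ 0 := by
    by_contra! hzero
    exact wronskian_ne_zero_of_imMulConj_ne_zero (hne w hw)
      (Polynomial.funext (by simpa using hzero))
  obtain ⟨w₀, hw₀, hpos⟩ := exists_imMulConj_pos_of_wronskian_neg ((hW t).lt_of_ne ht)
  by_contra! hnonpos
  have hconn : IsPreconnected {w : ℂ | 0 < w.im} := (convex_halfSpace_im_gt 0).isPreconnected
  obtain ⟨u, hu, hu0⟩ := hconn.intermediate_value hw hw₀ (continuous_imMulConj G F).continuousOn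
    ⟨hnonpos, hpos.le⟩
  exact hne u hu hu0

namespace KStable

variable {n : ℕ} {K : Set (Fin n → ℝ)}

lemma C_mul {h : MvPolynomial (Fin n) ℂ} (hh : KStable K h) {a : ℂ} (ha : a ≠ 0) :
    KStable K (C a * h) := by
  intro z hz
  simpa [ha] using hh z hz

lemma aeval_restrictLine_ne_zero (hK : ∀ c : ℝ, 0 < c → ∀ x ∈ K, c • x ∈ K)
    {h : MvPolynomial (Fin n) ℝ} (hh : KStable K (h.map (algebraMap ℝ ℂ))) (x : Fin n → ℝ)
    {v : Fin n → ℝ} (hv : v ∈ interior K) {w : ℂ} (hw : 0 < w.im) :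
    Polynomial.aeval w (restrictLine x v h) ≠ 0 := by
  rw [aeval_restrictLine, aeval_def, ← eval_map]
  refine hh _ ?_
  have hscale : w.im • v ∈ interior K :=
    (isOpenMap_smul₀ hw.ne').mapsTo_interior (fun y hy => hK w.im hw y hy) hv
  convert hscale using 2 with j
  simp [mul_comm]

lemma imMulConj_restrictLine_ne_zero (hK : ∀ c : ℝ, 0 < c → ∀ x ∈ K, c • x ∈ K)
    {f g : MvPolynomial (Fin n) ℝ} (hf : KStable K (f.map (algebraMap ℝ ℂ)))
    (hpencil : ∀ r : ℝ, KStable K ((g - r • f).map (algebraMap ℝ ℂ))) (x : Fin n → ℝ)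
    {v : Fin n → ℝ} (hv : v ∈ interior K) {w : ℂ} (hw : 0 < w.im) :
    imMulConj (restrictLine x v g) (restrictLine x v f) w ≠ 0 := by
  intro h0
  obtain ⟨r, hr⟩ := exists_eq_ofReal_mul_of_im_mul_conj_eq_zero
    (hf.aeval_restrictLine_ne_zero hK x hv hw) h0
  refine (hpencil r).aeval_restrictLine_ne_zero hK x hv hw ?_
  simp [hr]

end KStable

theorem stmt12_general {n : ℕ} (K : Set (Fin n → ℝ))
    (hK : ∀ c : ℝ, 0 < c → ∀ x ∈ K, c • x ∈ K)
    (f g : MvPolynomial (Fin n) ℝ) (hf : f ≠ 0)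
    (hlin : ∀ lam mu : ℝ, KStable K ((lam • f + mu • g).map (algebraMap ℝ ℂ)) ∨
      lam • f + mu • g = 0)
    (hW : ∀ v ∈ interior K, ∀ x : Fin n → ℝ, eval x (wronskian v f g) ≤ 0) :
    KStable K (g.map (algebraMap ℝ ℂ) + C Complex.I * f.map (algebraMap ℝ ℂ)) := by
  have hfK : KStable K (f.map (algebraMap ℝ ℂ)) := by simpa [hf] using hlin 1 0
  by_cases hprop : ∃ r : ℝ, g = r • f
  · obtain ⟨r, rfl⟩ := hprop
    have hr : (r + Complex.I : ℂ) ≠ 0 := fun h => by simpa using congrArg Complex.im h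
    simpa [smul_eq_C_mul, add_mul] using hfK.C_mul hr
  · have hpencil (r : ℝ) : KStable K ((g - r • f).map (algebraMap ℝ ℂ)) := by
      have hne : g - r • f ≠ 0 := fun h => hprop ⟨r, sub_eq_zero.mp h⟩
      simpa [neg_add_eq_sub, hne] using hlin (-r) 1
    intro z hz
    have hpos := imMulConj_pos_of_wronskian_nonpos
      (fun w => hfK.imMulConj_restrictLine_ne_zero hK hpencil (fun j => (z j).re) hz)
      (fun t => (eval_wronskian_restrictLine _ _ f g t).trans_le (hW _ hz _))
      (w := Complex.I) (by simp)
    simpa only [map_add, map_mul, eval_C, aeval_I_restrictLine] using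
      add_I_mul_ne_zero_of_im_mul_conj_pos hpos

/-- If `λ f + μ g` is `K`-stable or zero for all real `λ, μ`, and `W_v(f,g) ≤ 0` on `ℝⁿ`
for all `v ∈ int K`, then `g + i f` is `K`-stable. -/
theorem stmt12 {n : ℕ} (K : Set (Fin n → ℝ))
    (hKcl : IsClosed K) (hKconv : Convex ℝ K)
    (hKcone : ∀ (c : ℝ), 0 ≤ c → ∀ x ∈ K, c • x ∈ K)
    (hKpointed : K ∩ (-K) ⊆ {0}) (hKfull : (interior K).Nonempty)
    (f g : MvPolynomial (Fin n) ℝ) (hf : f ≠ 0) (hg : g ≠ 0)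
    (hlin : ∀ lam mu : ℝ, KStable K ((lam • f + mu • g).map (algebraMap ℝ ℂ)) ∨
      lam • f + mu • g = 0)
    (hW : ∀ v ∈ interior K, ∀ x : Fin n → ℝ, MvPolynomial.eval x (wronskian v f g) ≤ 0) :
    KStable K (g.map (algebraMap ℝ ℂ) + C Complex.I * f.map (algebraMap ℝ ℂ)) :=
  stmt12_general K (fun c hc => hKcone c hc.le) f g hf hlin hW
end
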